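/- Let s1, s3 > 0 and s2 ∈ (0,1). The vector fields ς1 = ∂x, ς2 = ∂y, and ς3 = y∂x − x∂y − ∂θ on ℝ^5 are infinitesimal symmetries of the distribution spanned by ξ4 and ξ5: for each i ∈ {1,2,3}, the Lie brackets [ς_i, ξ4] and [ς_i, ξ5] vanish identically, i.e., Dξ4(p)(ς_i(p)) − Dς_i(p)(ξ4(p)) = 0 and Dξ5(p)(ς_i(p)) − Dς_i(p)(ξ5(p)) = 0 for all p ∈ ℝ^5. -/

import Mathlib

/-!
Rigid motions of the plane act on the configurations `(x, y, θ, φ, ψ)` of the snake by moving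
`(x, y)` and turning `θ`; `ς₁, ς₂, ς₃` generate this action, up to the orientation of the rotation.
A vector field equivariant under the action therefore commutes with all three, and `ξ₄`, `ξ₅` are
equivariant: their coefficients involve neither `x` nor `y`, and `θ` enters only through the unit
vector `(cos θ, sin θ)`. As `[V, X] p` sees `X` only through its derivative along `V p`, that
derivative may be taken along the straight line through `p`, on which equivariance makes `X` turn
at constant speed.
-/

open Real

/-- `Υ¹ = sin(φ+θ)dx − cos(φ+θ)dy − (s₂cos φ − s₁)dθ + s₁dφ` at `p = (x,y,θ,φ,ψ)`. -/
noncomputable def snakeUps1 (s1 s2 : ℝ) (p : Fin 5 → ℝ) : (Fin 5 → ℝ) →ₗ[ℝ] ℝ :=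
  Real.sin (p 3 + p 2) • LinearMap.proj 0 - Real.cos (p 3 + p 2) • LinearMap.proj 1
    - (s2 * Real.cos (p 3) - s1) • LinearMap.proj 2 + s1 • LinearMap.proj 3

/-- `Υ² = sin θ dx − cos θ dy`. -/
noncomputable def snakeUps2 (p : Fin 5 → ℝ) : (Fin 5 → ℝ) →ₗ[ℝ] ℝ :=
  Real.sin (p 2) • LinearMap.proj 0 - Real.cos (p 2) • LinearMap.proj 1

/-- `Υ³ = sin(ψ+θ)dx − cos(ψ+θ)dy − ((1−s₂)cos ψ − s₃)dθ − s₃dψ`. -/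
noncomputable def snakeUps3 (s2 s3 : ℝ) (p : Fin 5 → ℝ) : (Fin 5 → ℝ) →ₗ[ℝ] ℝ :=
  Real.sin (p 4 + p 2) • LinearMap.proj 0 - Real.cos (p 4 + p 2) • LinearMap.proj 1
    - ((1 - s2) * Real.cos (p 4) - s3) • LinearMap.proj 2 - s3 • LinearMap.proj 4

/-- `ξ₁ = cos θ ∂x + sin θ ∂y + ((s₁²−s₂²)/s₁³) sin φ ∂φ + (((1−s₂)²−s₃²)/s₃³) sin ψ ∂ψ`. -/
noncomputable def snakeXi1 (s1 s2 s3 : ℝ) (p : Fin 5 → ℝ) : Fin 5 → ℝ :=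
  ![Real.cos (p 2), Real.sin (p 2), 0,
    (s1 ^ 2 - s2 ^ 2) / s1 ^ 3 * Real.sin (p 3),
    ((1 - s2) ^ 2 - s3 ^ 2) / s3 ^ 3 * Real.sin (p 4)]

/-- `ξ₂ = −(1/s₁²)(1 − (s₂/s₁)cos φ)∂φ − (1/s₃²)(1 − ((1−s₂)/s₃)cos ψ)∂ψ`. -/
noncomputable def snakeXi2 (s1 s2 s3 : ℝ) (p : Fin 5 → ℝ) : Fin 5 → ℝ :=
  ![0, 0, 0, -(1 / s1 ^ 2 * (1 - s2 / s1 * Real.cos (p 3))),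
    -(1 / s3 ^ 2 * (1 - (1 - s2) / s3 * Real.cos (p 4)))]

/-- `ξ₃ = sin θ ∂x − cos θ ∂y − (1/s₁)((s₂/s₁) − cos φ)∂φ + (1/s₃)(((1−s₂)/s₃) − cos ψ)∂ψ`. -/
noncomputable def snakeXi3 (s1 s2 s3 : ℝ) (p : Fin 5 → ℝ) : Fin 5 → ℝ :=
  ![Real.sin (p 2), -Real.cos (p 2), 0,
    -(1 / s1 * (s2 / s1 - Real.cos (p 3))),
    1 / s3 * ((1 - s2) / s3 - Real.cos (p 4))]

/-- `ξ₄ = ∂θ − (1 − (s₂/s₁)cos φ)∂φ − (1 − ((1−s₂)/s₃)cos ψ)∂ψ`. -/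
noncomputable def snakeXi4 (s1 s2 s3 : ℝ) (p : Fin 5 → ℝ) : Fin 5 → ℝ :=
  ![0, 0, 1, -(1 - s2 / s1 * Real.cos (p 3)), -(1 - (1 - s2) / s3 * Real.cos (p 4))]

/-- `ξ₅ = cos θ ∂x + sin θ ∂y + (1/s₁)sin φ ∂φ − (1/s₃)sin ψ ∂ψ`. -/
noncomputable def snakeXi5 (s1 s3 : ℝ) (p : Fin 5 → ℝ) : Fin 5 → ℝ :=
  ![Real.cos (p 2), Real.sin (p 2), 0, 1 / s1 * Real.sin (p 3), -(1 / s3 * Real.sin (p 4))]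

/-- `ς₁ = ∂x`. -/
def snakeSigma1 (_p : Fin 5 → ℝ) : Fin 5 → ℝ := ![1, 0, 0, 0, 0]

/-- `ς₂ = ∂y`. -/
def snakeSigma2 (_p : Fin 5 → ℝ) : Fin 5 → ℝ := ![0, 1, 0, 0, 0]

/-- `ς₃ = y∂x − x∂y − ∂θ`. -/
def snakeSigma3 (p : Fin 5 → ℝ) : Fin 5 → ℝ := ![p 1, -p 0, -1, 0, 0]

section NormedSpace

variable {𝕜 E F : Type*} [NontriviallyNormedField 𝕜] [NormedAddCommGroup E] [NormedSpace 𝕜 E]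
  [NormedAddCommGroup F] [NormedSpace 𝕜 F]

lemma lieBracket_eq_zero_iff_hasLineDerivAt {V X : E → E} {p : E}
    (hX : DifferentiableAt 𝕜 X p) :
    VectorField.lieBracket 𝕜 V X p = 0 ↔
      HasLineDerivAt 𝕜 X (fderiv 𝕜 V p (X p)) p (V p) := by
  have hline := hX.hasFDerivAt.hasLineDerivAt (V p)
  rw [VectorField.lieBracket, sub_eq_zero]
  exact ⟨fun h ↦ h ▸ hline, hline.unique⟩

@[fun_prop]
lemma differentiable_vecCons {n : ℕ} {f : E → F} {g : E → Fin n → F}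
    (hf : Differentiable 𝕜 f) (hg : Differentiable 𝕜 g) :
    Differentiable 𝕜 fun x ↦ Matrix.vecCons (f x) (g x) :=
  hf.finCons hg

end NormedSpace

/-- Rotation by the angle `a` of the first two components of a vector of `ℝ⁵`. This is the
differential of `rigidMotion a b c`, hence its action on tangent vectors. -/
noncomputable def rotateXY (a : ℝ) (u : Fin 5 → ℝ) : Fin 5 → ℝ :=
  ![cos a * u 0 - sin a * u 1, sin a * u 0 + cos a * u 1, u 2, u 3, u 4]

/-- The action on configurations `(x, y, θ, φ, ψ)` of the planar rigid motion that rotates by `a`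
about the origin and then translates by `(b, c)`. The angle `θ` is taken in `ℝ`, so this is an
action of the universal cover of `SE(2)`. -/
noncomputable def rigidMotion (a b c : ℝ) (p : Fin 5 → ℝ) : Fin 5 → ℝ :=
  rotateXY a p + ![b, c, a, 0, 0]

/-- A vector field on the configuration space is `SE(2)`-equivariant if every rigid motion of the
plane carries it to itself. -/
def IsSE2Equivariant (X : (Fin 5 → ℝ) → Fin 5 → ℝ) : Prop :=
  ∀ a b c p, X (rigidMotion a b c p) = rotateXY a (X p)

lemma hasDerivAt_rotateXY_mul_at_zero (ω : ℝ) (u : Fin 5 → ℝ) :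
    HasDerivAt (fun t ↦ rotateXY (t * ω) u) (ω • ![-u 1, u 0, 0, 0, 0]) 0 := by
  have hangle : HasDerivAt (fun t : ℝ ↦ t * ω) ω 0 := hasDerivAt_mul_const ω
  have hcos : HasDerivAt (fun t : ℝ ↦ cos (t * ω)) 0 0 := by simpa using hangle.cos
  have hsin : HasDerivAt (fun t : ℝ ↦ sin (t * ω)) ω 0 := by simpa using hangle.sin
  rw [hasDerivAt_pi]
  intro i
  fin_cases i
  · simpa [rotateXY] using (hcos.mul_const (u 0)).fun_sub (hsin.mul_const (u 1))
  · simpa [rotateXY] using (hsin.mul_const (u 0)).fun_add (hcos.mul_const (u 1))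
  all_goals simpa [rotateXY] using hasDerivAt_const (0 : ℝ) _

lemma exists_rigidMotion_eq_add (p : Fin 5 → ℝ) {v : Fin 5 → ℝ} (hφ : v 3 = 0) (hψ : v 4 = 0) :
    ∃ b c, rigidMotion (v 2) b c p = p + v := by
  refine ⟨(p + v) 0 - rotateXY (v 2) p 0, (p + v) 1 - rotateXY (v 2) p 1, ?_⟩
  ext i
  fin_cases i <;> simp [rigidMotion, rotateXY, hφ, hψ]

namespace IsSE2Equivariant

variable {X : (Fin 5 → ℝ) → Fin 5 → ℝ}

lemma apply_add (hX : IsSE2Equivariant X) (p : Fin 5 → ℝ) {v : Fin 5 → ℝ}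
    (hφ : v 3 = 0) (hψ : v 4 = 0) : X (p + v) = rotateXY (v 2) (X p) := by
  obtain ⟨b, c, hbc⟩ := exists_rigidMotion_eq_add p hφ hψ
  rw [← hbc, hX]

lemma hasLineDerivAt (hX : IsSE2Equivariant X) (p : Fin 5 → ℝ) {v : Fin 5 → ℝ}
    (hφ : v 3 = 0) (hψ : v 4 = 0) :
    HasLineDerivAt ℝ X (v 2 • ![-X p 1, X p 0, 0, 0, 0]) p v := by
  have hrotate (t : ℝ) : X (p + t • v) = rotateXY (t * v 2) (X p) :=
    hX.apply_add p (by simp [hφ]) (by simp [hψ])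
  simpa only [HasLineDerivAt, hrotate] using hasDerivAt_rotateXY_mul_at_zero (v 2) (X p)

end IsSE2Equivariant

lemma isSE2Equivariant_snakeXi4 (s1 s2 s3 : ℝ) : IsSE2Equivariant (snakeXi4 s1 s2 s3) := by
  intro a b c p
  simp [snakeXi4, rigidMotion, rotateXY]

lemma isSE2Equivariant_snakeXi5 (s1 s3 : ℝ) : IsSE2Equivariant (snakeXi5 s1 s3) := by
  intro a b c p
  simp [snakeXi5, rigidMotion, rotateXY, add_comm _ a, cos_add, sin_add]

lemma differentiable_snakeXi4 (s1 s2 s3 : ℝ) : Differentiable ℝ (snakeXi4 s1 s2 s3) := by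
  unfold snakeXi4
  fun_prop

lemma differentiable_snakeXi5 (s1 s3 : ℝ) : Differentiable ℝ (snakeXi5 s1 s3) := by
  unfold snakeXi5
  fun_prop

lemma fderiv_snakeSigma1 (p : Fin 5 → ℝ) : fderiv ℝ snakeSigma1 p = 0 :=
  fderiv_const_apply _

lemma fderiv_snakeSigma2 (p : Fin 5 → ℝ) : fderiv ℝ snakeSigma2 p = 0 :=
  fderiv_const_apply _

lemma differentiable_snakeSigma3 : Differentiable ℝ snakeSigma3 := by
  unfold snakeSigma3
  fun_prop

lemma fderiv_snakeSigma3_apply (p u : Fin 5 → ℝ) :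
    fderiv ℝ snakeSigma3 p u = ![u 1, -u 0, 0, 0, 0] := by
  have hcoord (i : Fin 5) : HasDerivAt (fun t : ℝ ↦ p i + t * u i) (u i) 0 :=
    (hasDerivAt_mul_const (u i)).const_add (p i)
  have hline : HasLineDerivAt ℝ snakeSigma3 ![u 1, -u 0, 0, 0, 0] p u := by
    rw [HasLineDerivAt, hasDerivAt_pi]
    intro i
    fin_cases i
    · simpa [snakeSigma3] using hcoord 1
    · simpa [snakeSigma3] using (hcoord 0).fun_neg
    all_goals simpa [snakeSigma3] using hasDerivAt_const (0 : ℝ) _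
  exact ((differentiable_snakeSigma3 p).hasFDerivAt.hasLineDerivAt u).unique hline

theorem snake_se2_symmetries_general {X : (Fin 5 → ℝ) → Fin 5 → ℝ} {p : Fin 5 → ℝ}
    (hX : IsSE2Equivariant X) (hXp : DifferentiableAt ℝ X p) :
    VectorField.lieBracket ℝ snakeSigma1 X p = 0 ∧
    VectorField.lieBracket ℝ snakeSigma2 X p = 0 ∧
    VectorField.lieBracket ℝ snakeSigma3 X p = 0 := by
  simp only [lieBracket_eq_zero_iff_hasLineDerivAt hXp, fderiv_snakeSigma1, fderiv_snakeSigma2,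
    fderiv_snakeSigma3_apply]
  refine ⟨?_, ?_, ?_⟩
  · simpa [snakeSigma1] using hX.hasLineDerivAt p (v := snakeSigma1 p) rfl rfl
  · simpa [snakeSigma2] using hX.hasLineDerivAt p (v := snakeSigma2 p) rfl rfl
  · simpa [snakeSigma3] using hX.hasLineDerivAt p (v := snakeSigma3 p) rfl rfl

/-- The generators `ς₁, ς₂, ς₃` of `𝔰𝔢(2)` are infinitesimal symmetries of the
distribution spanned by `ξ₄` and `ξ₅`: all brackets `[ςᵢ, ξ₄]` and `[ςᵢ, ξ₅]` vanish. -/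
theorem snake_se2_symmetries (s1 s2 s3 : ℝ) (hs1 : 0 < s1) (hs3 : 0 < s3)
    (hs2 : s2 ∈ Set.Ioo (0 : ℝ) 1) (p : Fin 5 → ℝ) :
    (fderiv ℝ (snakeXi4 s1 s2 s3) p (snakeSigma1 p)
        - fderiv ℝ snakeSigma1 p (snakeXi4 s1 s2 s3 p) = 0) ∧
    (fderiv ℝ (snakeXi5 s1 s3) p (snakeSigma1 p)
        - fderiv ℝ snakeSigma1 p (snakeXi5 s1 s3 p) = 0) ∧
    (fderiv ℝ (snakeXi4 s1 s2 s3) p (snakeSigma2 p)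
        - fderiv ℝ snakeSigma2 p (snakeXi4 s1 s2 s3 p) = 0) ∧
    (fderiv ℝ (snakeXi5 s1 s3) p (snakeSigma2 p)
        - fderiv ℝ snakeSigma2 p (snakeXi5 s1 s3 p) = 0) ∧
    (fderiv ℝ (snakeXi4 s1 s2 s3) p (snakeSigma3 p)
        - fderiv ℝ snakeSigma3 p (snakeXi4 s1 s2 s3 p) = 0) ∧
    (fderiv ℝ (snakeXi5 s1 s3) p (snakeSigma3 p)
        - fderiv ℝ snakeSigma3 p (snakeXi5 s1 s3 p) = 0) := by
  obtain ⟨h14, h24, h34⟩ := snake_se2_symmetries_general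
    (isSE2Equivariant_snakeXi4 s1 s2 s3) (differentiable_snakeXi4 s1 s2 s3 p)
  obtain ⟨h15, h25, h35⟩ := snake_se2_symmetries_general
    (isSE2Equivariant_snakeXi5 s1 s3) (differentiable_snakeXi5 s1 s3 p)
  exact ⟨h14, h15, h24, h25, h34, h35⟩
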